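/- Let C be a symmetric monoidal category that is preadditive and k-linear with k-bilinear tensor product of morphisms, where k is a field of characteristic zero. Suppose C is connected, i.e. the only idempotent endomorphisms of the monoidal unit 𝟙 are 0 and the identity. Then every invertible object x of C (one for which there exists an object y with x ⊗ y ≅ 𝟙) satisfies: the self-braiding β_{x,x} : x ⊗ x → x ⊗ x equals the identity, or β_{x,x} equals minus the identity, and not both unless x ⊗ x ≅ 0. (In the paper's formulation: of Λ²(x) and S²(x), one is zero and the other is isomorphic to x^{⊗2}.) -/

import Mathlib

/-!
STATEMENT 0: In a connected `k`-linear symmetric monoidal category (`k` of characteristic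
zero, tensor `k`-bilinear), every invertible object `x` has self-braiding equal to the
identity or to minus the identity, and not both unless `x ⊗ x` is a zero object.
-/

open CategoryTheory Limits MonoidalCategory

/-!
Tensoring with an inverse of `x ⊗ x` embeds the ring `End (x ⊗ x)` into `End (𝟙_ C)`. The braiding
`β_ x x` squares to the identity, hence is sent to some `s` with `s * s = 1`. Then `(1 + s) / 2` is
idempotent, and connectedness forces it to be `0` or `1`, that is `s = -1` or `s = 1`.
-/

theorem eq_one_or_eq_neg_one_of_mul_self_eq_one {R : Type*} [Ring R] (htwo : IsUnit (2 : R))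
    (hR : ∀ e : R, IsIdempotentElem e → e = 0 ∨ e = 1) {s : R} (hs : s * s = 1) :
    s = 1 ∨ s = -1 := by
  obtain ⟨e, he⟩ : ∃ e, 2 * e = 1 + s := htwo.exists_right_inv.imp' (· * (1 + s)) fun a ha => by
    rw [← mul_assoc, ha, one_mul]
  have e_idem : IsIdempotentElem e := (htwo.mul htwo).mul_left_cancel <| calc
    2 * 2 * (e * e) = (2 * e) * (2 * e) := (Commute.ofNat_left 2 e).mul_mul_mul_comm 2 e
    _ = 2 * (1 + s) := by rw [he, mul_add, mul_one, add_mul, one_mul, hs, add_comm s 1, two_mul]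
    _ = 2 * 2 * e := by rw [← he, mul_assoc]
  rcases hR e e_idem with rfl | rfl
  · right
    rw [mul_zero] at he
    exact eq_neg_of_add_eq_zero_right he.symm
  · left
    rw [mul_one, ← one_add_one_eq_two] at he
    exact (add_left_cancel he).symm

section Monoidal

variable {C : Type*} [Category C] [MonoidalCategory C]

/-- Invertible objects, also called line objects. Only a right inverse is required, which in a
braided category is also a left inverse. -/
def IsTensorInvertible (x : C) : Prop := ∃ y : C, Nonempty (x ⊗ y ≅ 𝟙_ C)

theorem IsTensorInvertible.tensor {x z : C} (hx : IsTensorInvertible x)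
    (hz : IsTensorInvertible z) : IsTensorInvertible (x ⊗ z) := by
  obtain ⟨y, ⟨i⟩⟩ := hx
  obtain ⟨w, ⟨j⟩⟩ := hz
  exact ⟨w ⊗ y, ⟨α_ x z (w ⊗ y) ≪≫
    whiskerLeftIso x ((α_ z w y).symm ≪≫ whiskerRightIso j y ≪≫ λ_ y) ≪≫ i⟩⟩

theorem faithful_tensorRight_of_iso_unit {w z : C} (i : w ⊗ z ≅ 𝟙_ C) :
    (tensorRight w).Faithful :=
  Functor.Faithful.of_comp_iso (G := tensorRight z) <|
    (tensorRightTensor w z).symm ≪≫ (tensoringRight C).mapIso i ≪≫ rightUnitorNatIso C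

variable [Preadditive C] [MonoidalPreadditive C]

/-- The map `e ↦ e ▷ w`, with endomorphisms of `z ⊗ w` regarded as endomorphisms of the unit. It
reduces questions about endomorphisms of a line object to the ring `End (𝟙_ C)`. -/
def endToEndUnit {z w : C} (i : z ⊗ w ≅ 𝟙_ C) : End z →+* End (𝟙_ C) where
  toMonoidHom := i.conj.toMonoidHom.comp ((tensorRight w).mapEnd z)
  map_zero' := show i.inv ≫ (0 : z ⟶ z) ▷ w ≫ i.hom = 0 by simp
  map_add' (e f : z ⟶ z) :=
    show i.inv ≫ (e + f) ▷ w ≫ i.hom = i.inv ≫ e ▷ w ≫ i.hom + i.inv ≫ f ▷ w ≫ i.hom by simp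

variable [BraidedCategory C]

theorem endToEndUnit_injective {z w : C} (i : z ⊗ w ≅ 𝟙_ C) :
    Function.Injective (endToEndUnit i) :=
  have := faithful_tensorRight_of_iso_unit (β_ w z ≪≫ i)
  i.conj.injective.comp (tensorRight w).map_injective

theorem IsTensorInvertible.eq_id_or_eq_neg_id_of_comp_self_eq_id {z : C}
    (hz : IsTensorInvertible z) (htwo : IsUnit (2 : End (𝟙_ C)))
    (hconn : ∀ e : 𝟙_ C ⟶ 𝟙_ C, e ≫ e = e → e = 0 ∨ e = 𝟙 (𝟙_ C))
    {s : z ⟶ z} (hs : s ≫ s = 𝟙 z) : s = 𝟙 z ∨ s = -𝟙 z := by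
  obtain ⟨w, ⟨i⟩⟩ := hz
  let φ := endToEndUnit i
  have φ_inj : Function.Injective φ := endToEndUnit_injective i
  have φ_sq : φ s * φ s = 1 := by
    rw [← map_mul, ← map_one φ]
    exact congrArg φ hs
  refine (eq_one_or_eq_neg_one_of_mul_self_eq_one htwo hconn φ_sq).imp
    (fun h => φ_inj ?_) (fun h => φ_inj ?_)
  · exact h.trans (map_one φ).symm
  · exact h.trans (by rw [← map_one φ, ← map_neg]; rfl)

theorem IsTensorInvertible.isZero_of_id_eq_neg_id {z : C} (hz : IsTensorInvertible z)
    (htwo : IsUnit (2 : End (𝟙_ C))) (h : 𝟙 z = -𝟙 z) : IsZero z := by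
  obtain ⟨w, ⟨i⟩⟩ := hz
  have two_eq_zero : (2 : End z) = 0 := by
    rw [← one_add_one_eq_two]
    exact eq_neg_iff_add_eq_zero.mp h
  have unit_two_eq_zero : (2 : End (𝟙_ C)) = 0 := by
    rw [← map_ofNat (endToEndUnit i) 2, two_eq_zero, map_zero]
  have : Subsingleton (End (𝟙_ C)) :=
    subsingleton_of_zero_eq_one (isUnit_zero_iff.mp (unit_two_eq_zero ▸ htwo))
  exact (IsZero.iff_id_eq_zero z).mpr (endToEndUnit_injective i (Subsingleton.elim _ _))

end Monoidal

theorem line_object_bosonic_or_fermionic_general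
    {C : Type*} [Category C] [MonoidalCategory C] [SymmetricCategory C]
    [Preadditive C] [MonoidalPreadditive C] (htwo : IsUnit (2 : End (𝟙_ C)))
    (hconn : ∀ e : 𝟙_ C ⟶ 𝟙_ C, e ≫ e = e → e = 0 ∨ e = 𝟙 (𝟙_ C))
    (x : C) (hx : ∃ y : C, Nonempty (x ⊗ y ≅ 𝟙_ C)) :
    ((β_ x x).hom = 𝟙 (x ⊗ x) ∨ (β_ x x).hom = -𝟙 (x ⊗ x)) ∧
      (((β_ x x).hom = 𝟙 (x ⊗ x) ∧ (β_ x x).hom = -𝟙 (x ⊗ x)) → IsZero (x ⊗ x)) :=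
  have hxx : IsTensorInvertible (x ⊗ x) := IsTensorInvertible.tensor hx hx
  ⟨hxx.eq_id_or_eq_neg_id_of_comp_self_eq_id htwo hconn (SymmetricCategory.symmetry x x),
    fun ⟨h_id, h_neg⟩ => hxx.isZero_of_id_eq_neg_id htwo (h_id.symm.trans h_neg)⟩

theorem line_object_bosonic_or_fermionic
    (k : Type*) [Field k] [CharZero k]
    {C : Type*} [Category C] [MonoidalCategory C] [SymmetricCategory C]
    [Preadditive C] [CategoryTheory.Linear k C]
    [MonoidalPreadditive C] [MonoidalLinear k C]
    (hconn : ∀ e : 𝟙_ C ⟶ 𝟙_ C, e ≫ e = e → e = 0 ∨ e = 𝟙 (𝟙_ C))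
    (x : C) (hx : ∃ y : C, Nonempty (x ⊗ y ≅ 𝟙_ C)) :
    ((β_ x x).hom = 𝟙 (x ⊗ x) ∨ (β_ x x).hom = -𝟙 (x ⊗ x)) ∧
      (((β_ x x).hom = 𝟙 (x ⊗ x) ∧ (β_ x x).hom = -𝟙 (x ⊗ x)) → IsZero (x ⊗ x)) := by
  have htwo : IsUnit (2 : End (𝟙_ C)) := by
    rw [← map_ofNat (algebraMap k (End (𝟙_ C))) 2]
    exact (IsUnit.mk0 (2 : k) two_ne_zero).map _
  exact line_object_bosonic_or_fermionic_general htwo hconn x hx
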